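/- There exists a computable, nondecreasing, continuous function t : [0,1] → ℝ with t(1) = t(0) + 1 such that the induced circle endomorphism T₁ : ℝ/ℤ → ℝ/ℤ, T₁(x) = t(x) mod ℤ, has the property that every T₁-invariant Borel probability measure on ℝ/ℤ is not computable. -/

import Mathlib

open Filter Topology MeasureTheory

/-- A function `t : [0,1] → ℝ` is computable if its values at rationals in `[0,1]` can
be computably approximated, and it has a computable modulus of continuity. -/
def IsComputableFunOnUnitInterval (t : ℝ → ℝ) : Prop :=
  (∃ F : ℚ → ℕ → ℚ, Computable₂ F ∧
    ∀ q : ℚ, (q : ℝ) ∈ Set.Icc (0 : ℝ) 1 →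
      ∀ n : ℕ, |(F q n : ℝ) - t (q : ℝ)| < 2 ^ (-(n : ℤ))) ∧
  (∃ m : ℕ → ℕ, Computable m ∧
    ∀ x ∈ Set.Icc (0 : ℝ) 1, ∀ y ∈ Set.Icc (0 : ℝ) 1, ∀ n : ℕ,
      |x - y| ≤ 2 ^ (-(m n : ℤ)) → |t x - t y| ≤ 2 ^ (-(n : ℤ)))

/-- The open arc of the circle `ℝ/ℤ` with rational endpoints `a < b`. -/
def circleArc (a b : ℚ) : Set (AddCircle (1 : ℝ)) :=
  (fun x : ℝ => (x : AddCircle (1 : ℝ))) '' Set.Ioo ((a : ℝ)) ((b : ℝ))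

/-- A Borel probability measure `μ` on the circle `ℝ/ℤ` is computable if the measures
of finite unions of open rational arcs are lower-computable reals, uniformly in the
list of arcs. -/
def IsComputableMeasureCircle (μ : Measure (AddCircle (1 : ℝ))) : Prop :=
  ∃ f : List (ℚ × ℚ) → ℕ → ℚ, Computable₂ f ∧
    ∀ L : List (ℚ × ℚ), Monotone (f L) ∧
      Tendsto (fun m => (f L m : ℝ)) atTop
        (𝓝 (μ (⋃ p ∈ L, circleArc p.1 p.2)).toReal)

/-! The map is `x ↦ x + H x`, where the displacement `H ≥ 0` is a computable contraction that
vanishes somewhere and whose positivity set is a union of balls diagonalizing against all programs.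
Cutting the circle at a zero of `H`, the position in the resulting interval is a bounded function
that never decreases along orbits, so it is almost everywhere constant along orbits of an invariant
finite measure, which is therefore concentrated on the zeros of `H`. But from a computable measure
one can compute, for every scale `δ n`, a multiple of `δ n` whose `δ n`-ball is seen to have
positive measure. If the `n`-th program does this, then that ball for its own index `n` is
contained in `{H > 0}` by construction, a contradiction. Since the scales are summable with small
sum, the balls do not cover the circle, so `H` does have a zero.
-/

section Computability

variable {α β : Type*} [Primcodable α]

theorem exists_computable_selector [Denumerable β] {R : α → β → Prop}
    (hR : ComputablePred fun p : α × β => R p.1 p.2) (hex : ∀ a, ∃ b, R a b) :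
    ∃ f : α → β, Computable f ∧ ∀ a, R a (f a) := by
  classical
  have hex' : ∀ a, ∃ n, R a (Denumerable.ofNat β n) := fun a =>
    (hex a).imp' Encodable.encode fun b hb => by rwa [Denumerable.ofNat_encode]
  have hR' : ComputablePred fun p : α × ℕ => R p.1 (Denumerable.ofNat β p.2) :=
    ComputablePred.computable_of_manyOneReducible
      ⟨_, Computable.fst.pair ((Computable.ofNat β).comp Computable.snd), fun _ => Iff.rfl⟩ hR
  exact ⟨_, (Computable.ofNat β).comp (Computable.find hR' hex'), fun a => Nat.find_spec (hex' a)⟩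

theorem computable_of_computablePred_graph [Denumerable β] {f : α → β}
    (hf : ComputablePred fun p : α × β => f p.1 = p.2) : Computable f := by
  obtain ⟨g, hg, hfg⟩ := exists_computable_selector hf fun a => ⟨f a, rfl⟩
  exact hg.of_eq fun a => (hfg a).symm

theorem find_eq_succ_of_strictMono {c : ℕ → ℕ} [DecidablePred (· ∈ Set.range c)] (hc : StrictMono c)
    (n : ℕ) (h : ∃ z, c n < z ∧ z ∈ Set.range c) : Nat.find h = c (n + 1) := by
  refine (Nat.find_eq_iff h).2 ⟨⟨hc n.lt_succ_self, n + 1, rfl⟩, ?_⟩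
  rintro _ hlt ⟨hgt, k, rfl⟩
  have := hc.lt_iff_lt.1 hgt
  have := hc.lt_iff_lt.1 hlt
  omega

theorem computable_of_strictMono {c : ℕ → ℕ} (hc : StrictMono c)
    (hr : PrimrecPred (· ∈ Set.range c)) : Computable c := by
  classical
  have hex : ∀ y, ∃ z, y < z ∧ z ∈ Set.range c := fun y =>
    ⟨c (y + 1), (Nat.lt_succ_self y).trans_le hc.le_apply, y + 1, rfl⟩
  have hnext : Computable fun y => Nat.find (hex y) := Computable.find
    ((Primrec.nat_lt.comp Primrec.fst Primrec.snd).and (hr.comp Primrec.snd)).computablePred hex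
  refine (Computable.nat_rec Computable.id (Computable.const (c 0))
    (hnext.comp (Computable.snd.comp Computable.snd)).to₂).of_eq fun n => ?_
  induction n with
  | zero => rfl
  | succ n ih =>
    exact (congrArg (fun y => Nat.find (hex y)) ih).trans (find_eq_succ_of_strictMono hc n _)

/-- The derived `Denumerable` structure numbers elements by the rank of their code, so
recovering the code itself is a search through the range of `encode`. -/
theorem computable_encode_of_primrecPred_range [e : Encodable β] [Infinite β]
    (hr : PrimrecPred (· ∈ Set.range e.encode)) :
    @Computable β ℕ (@Primcodable.ofDenumerable β (Denumerable.ofEncodableOfInfinite β)) _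
      e.encode := by
  let := @Encodable.decidableRangeEncode β _
  have : Infinite (Set.range e.encode) :=
    Infinite.of_injective _ (Equiv.ofInjective _ e.encode_injective).injective
  let d : Denumerable β := Denumerable.ofEncodableOfInfinite β
  have hnth : ∀ n, e.encode (Denumerable.ofNat β n) = Nat.Subtype.ofNat (Set.range e.encode) n :=
    fun n => congrArg Subtype.val ((Encodable.equivRangeEncode β).apply_symm_apply _)
  have hmono : StrictMono fun n => e.encode (Denumerable.ofNat β n) :=
    strictMono_nat_of_lt_succ fun n => by
      rw [hnth, hnth]
      exact Nat.Subtype.lt_succ_self _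
  have hrange : Set.range (fun n => e.encode (Denumerable.ofNat β n)) = Set.range e.encode :=
    (Denumerable.eqv β).symm.surjective.range_comp e.encode
  refine ((computable_of_strictMono hmono (by rwa [hrange])).comp Computable.encode).of_eq
    fun b => congrArg e.encode (Denumerable.ofNat_encode b)

end Computability

section IntPrimrec

theorem primrec_int_toNat : Primrec Int.toNat := by
  have h : Primrec fun z : ℤ =>
      bif Encodable.encode z % 2 == 0 then Encodable.encode z / 2 else 0 :=
    Primrec.cond (Primrec.beq.comp (Primrec.nat_mod.comp Primrec.encode (Primrec.const 2))
      (Primrec.const 0)) (Primrec.nat_div.comp Primrec.encode (Primrec.const 2)) (Primrec.const 0)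
  refine h.of_eq fun z => ?_
  rcases z with n | n
  · change (bif 2 * n % 2 == 0 then 2 * n / 2 else 0) = n
    simp
  · change (bif (2 * n + 1) % 2 == 0 then (2 * n + 1) / 2 else 0) = 0
    simp [Nat.add_mod]

theorem primrec_int_natAbs : Primrec Int.natAbs := by
  have h : Primrec fun z : ℤ => (Encodable.encode z + 1) / 2 :=
    Primrec.nat_div.comp (Primrec.succ.comp Primrec.encode) (Primrec.const 2)
  refine h.of_eq fun z => ?_
  rcases z with n | n
  · change (2 * n + 1) / 2 = n
    omega
  · change (2 * n + 1 + 1) / 2 = n + 1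
    omega

theorem encode_natCast_sub_natCast (m n : ℕ) :
    Encodable.encode (m - n : ℤ) = 2 * (m - n) + (2 * (n - m) - 1) := by
  rcases le_or_gt n m with hnm | hmn
  · obtain ⟨k, rfl⟩ := Nat.exists_eq_add_of_le hnm
    rw [show ((n + k : ℕ) - n : ℤ) = Int.ofNat k by simp]
    change 2 * k = _
    omega
  · obtain ⟨k, rfl⟩ := Nat.exists_eq_add_of_lt hmn
    rw [show (m - (m + k + 1 : ℕ) : ℤ) = Int.negSucc k by push_cast [Int.negSucc_eq]; ring]
    change 2 * k + 1 = _
    omega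

theorem primrec_int_natCast_sub_natCast : Primrec₂ fun m n : ℕ => (m - n : ℤ) := by
  have double : Primrec fun n : ℕ => 2 * n := Primrec.nat_double
  have h : Primrec₂ fun m n : ℕ => Denumerable.ofNat ℤ (2 * (m - n) + (2 * (n - m) - 1)) :=
    (Primrec.ofNat ℤ).comp₂ <| Primrec.nat_add.comp₂ (double.comp₂ Primrec.nat_sub)
      (Primrec.pred.comp₂ (double.comp₂ (Primrec.nat_sub.comp₂ Primrec₂.right Primrec₂.left)))
  refine h.of_eq fun m n => ?_
  rw [← encode_natCast_sub_natCast, Denumerable.ofNat_encode]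

theorem primrec_int_toNat_neg : Primrec fun z : ℤ => (-z).toNat :=
  (Primrec.nat_sub.comp primrec_int_natAbs primrec_int_toNat).of_eq fun z => by omega

theorem primrec_int_natCast : Primrec fun n : ℕ => (n : ℤ) :=
  (primrec_int_natCast_sub_natCast.comp Primrec.id (Primrec.const 0)).of_eq fun n => by simp

theorem primrec_int_add : Primrec₂ fun x y : ℤ => x + y := by
  have pos : Primrec fun p : ℤ × ℤ => p.1.toNat + p.2.toNat :=
    Primrec.nat_add.comp (primrec_int_toNat.comp .fst) (primrec_int_toNat.comp .snd)
  have neg : Primrec fun p : ℤ × ℤ => (-p.1).toNat + (-p.2).toNat :=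
    Primrec.nat_add.comp (primrec_int_toNat_neg.comp .fst) (primrec_int_toNat_neg.comp .snd)
  refine (primrec_int_natCast_sub_natCast.comp pos neg).of_eq fun p => ?_
  change _ = p.1 + p.2
  omega

theorem primrec_int_mul : Primrec₂ fun x y : ℤ => x * y := by
  have pos : Primrec fun p : ℤ × ℤ => p.1.toNat * p.2.toNat + (-p.1).toNat * (-p.2).toNat :=
    Primrec.nat_add.comp
      (Primrec.nat_mul.comp (primrec_int_toNat.comp .fst) (primrec_int_toNat.comp .snd))
      (Primrec.nat_mul.comp (primrec_int_toNat_neg.comp .fst) (primrec_int_toNat_neg.comp .snd))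
  have neg : Primrec fun p : ℤ × ℤ => p.1.toNat * (-p.2).toNat + (-p.1).toNat * p.2.toNat :=
    Primrec.nat_add.comp
      (Primrec.nat_mul.comp (primrec_int_toNat.comp .fst) (primrec_int_toNat_neg.comp .snd))
      (Primrec.nat_mul.comp (primrec_int_toNat_neg.comp .fst) (primrec_int_toNat.comp .snd))
  refine (primrec_int_natCast_sub_natCast.comp pos neg).of_eq fun p => ?_
  calc _ = ((p.1.toNat : ℤ) - (-p.1).toNat) * (p.2.toNat - (-p.2).toNat) := by push_cast; ring
    _ = p.1 * p.2 := by rw [Int.toNat_sub_toNat_neg, Int.toNat_sub_toNat_neg]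

theorem primrecRel_int_le : PrimrecRel fun x y : ℤ => x ≤ y :=
  (Primrec.nat_le.comp
    (Primrec.nat_add.comp (primrec_int_toNat.comp .fst) (primrec_int_toNat_neg.comp .snd))
    (Primrec.nat_add.comp (primrec_int_toNat.comp .snd)
      (primrec_int_toNat_neg.comp .fst))).of_eq fun p => by omega

end IntPrimrec

section RatComputable

theorem nat_coprime_iff_forall_lt (a b : ℕ) :
    a.Coprime b ↔ ∀ d < a + b + 1, ¬(d ∣ a ∧ d ∣ b) ∨ d = 1 := by
  refine ⟨fun h d _ => not_or_of_imp fun hd => Nat.eq_one_of_dvd_coprimes h hd.1 hd.2, fun h => ?_⟩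
  have hlt : a.gcd b < a + b + 1 := by
    rcases a.eq_zero_or_pos with rfl | ha
    · simp
    · have := Nat.gcd_le_left b ha
      omega
  exact (h _ hlt).resolve_left (not_not.2 ⟨Nat.gcd_dvd_left a b, Nat.gcd_dvd_right a b⟩)

theorem primrecRel_nat_dvd : PrimrecRel fun d n : ℕ => d ∣ n :=
  (Primrec.eq.comp (Primrec.nat_mod.comp .snd .fst) (Primrec.const 0)).of_eq fun _ =>
    (Nat.dvd_iff_mod_eq_zero ..).symm

theorem primrecRel_nat_coprime : PrimrecRel Nat.Coprime := by
  have h : PrimrecRel fun (d : ℕ) (p : ℕ × ℕ) => ¬(d ∣ p.1 ∧ d ∣ p.2) ∨ d = 1 :=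
    .or (.not (.and (primrecRel_nat_dvd.comp .fst (Primrec.fst.comp .snd))
      (primrecRel_nat_dvd.comp .fst (Primrec.snd.comp .snd))))
      (Primrec.eq.comp .fst (.const 1))
  have hbound : Primrec fun p : ℕ × ℕ => List.range (p.1 + p.2 + 1) :=
    Primrec.list_range.comp (Primrec.succ.comp (Primrec.nat_add.comp .fst .snd))
  exact (h.forall_mem_list.comp hbound .id).of_eq fun p => by
    simp only [List.mem_range, id, nat_coprime_iff_forall_lt]

theorem mem_range_rat_encode (z : ℕ) :
    z ∈ Set.range (Rat.instEncodable.encode) ↔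
      0 < z.unpair.2 ∧ (Denumerable.ofNat ℤ z.unpair.1).natAbs.Coprime z.unpair.2 := by
  have hcode : ∀ q : ℚ, Rat.instEncodable.encode q = Nat.pair (Encodable.encode q.num) q.den :=
    fun _ => rfl
  constructor
  · rintro ⟨q, rfl⟩
    rw [hcode, Nat.unpair_pair, Denumerable.ofNat_encode]
    exact ⟨q.pos, q.reduced⟩
  · rintro ⟨hpos, hcop⟩
    refine ⟨⟨_, z.unpair.2, hpos.ne', hcop⟩, ?_⟩
    rw [hcode, Denumerable.encode_ofNat, Nat.pair_unpair]

theorem computable_rat_num_den : Computable fun q : ℚ => (q.num, q.den) := by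
  have hr : PrimrecPred (· ∈ Set.range Rat.instEncodable.encode) := by
    have : PrimrecPred fun z : ℕ => 0 < z.unpair.2 ∧
        (Denumerable.ofNat ℤ z.unpair.1).natAbs.Coprime z.unpair.2 :=
      (Primrec.nat_lt.comp (Primrec.const 0) (Primrec.snd.comp .unpair)).and
      (primrecRel_nat_coprime.comp (primrec_int_natAbs.comp ((Primrec.ofNat ℤ).comp
        (Primrec.fst.comp .unpair))) (Primrec.snd.comp .unpair))
    exact this.of_eq fun z => (mem_range_rat_encode z).symm
  exact Computable.encode_iff.1 (computable_encode_of_primrecPred_range hr)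

theorem computable_rat_num : Computable Rat.num := Computable.fst.comp computable_rat_num_den

theorem computable_rat_den : Computable Rat.den := Computable.snd.comp computable_rat_num_den

theorem mkRat_eq_iff_num_mul (a : ℤ) (b : ℕ) (q : ℚ) :
    mkRat a b = q ↔ b = 0 ∧ q.num = 0 ∨ b ≠ 0 ∧ a * q.den = q.num * b := by
  rcases eq_or_ne b 0 with rfl | hb
  · simp [eq_comm]
  · conv_lhs => rw [← q.mkRat_self, Rat.mkRat_eq_iff hb q.den_nz]
    simp [hb]

theorem computable_mkRat : Computable₂ mkRat := by
  have h : PrimrecRel fun p q : ℤ × ℕ =>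
      p.2 = 0 ∧ q.1 = 0 ∨ p.2 ≠ 0 ∧ p.1 * q.2 = q.1 * p.2 := by
    have a : Primrec fun x : (ℤ × ℕ) × (ℤ × ℕ) => x.1.1 := Primrec.fst.comp .fst
    have b : Primrec fun x : (ℤ × ℕ) × (ℤ × ℕ) => x.1.2 := Primrec.snd.comp .fst
    have num : Primrec fun x : (ℤ × ℕ) × (ℤ × ℕ) => x.2.1 := Primrec.fst.comp .snd
    have den : Primrec fun x : (ℤ × ℕ) × (ℤ × ℕ) => x.2.2 := Primrec.snd.comp .snd
    have hb := Primrec.eq.comp b (Primrec.const 0)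
    exact (hb.and (Primrec.eq.comp num (Primrec.const 0))).or
      (hb.not.and (Primrec.eq.comp (primrec_int_mul.comp a (primrec_int_natCast.comp den))
        (primrec_int_mul.comp num (primrec_int_natCast.comp b))))
  exact computable_of_computablePred_graph <| ComputablePred.of_eq
    (ComputablePred.computable_of_manyOneReducible
      ⟨_, Computable.fst.pair (computable_rat_num_den.comp .snd), fun _ => Iff.rfl⟩
      h.computablePred)
    fun x => (mkRat_eq_iff_num_mul x.1.1 x.1.2 x.2).symm

theorem computable_rat_intCast : Computable fun z : ℤ => (z : ℚ) :=
  (computable_mkRat.comp .id (Computable.const 1)).of_eq fun z => by simp [Rat.mkRat_eq_div]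

theorem computable_rat_natCast : Computable fun n : ℕ => (n : ℚ) :=
  computable_rat_intCast.comp primrec_int_natCast.to_comp

theorem computable_rat_mul : Computable₂ fun x y : ℚ => x * y :=
  (computable_mkRat.comp
    (primrec_int_mul.to_comp.comp (computable_rat_num.comp .fst) (computable_rat_num.comp .snd))
    (Primrec.nat_mul.to_comp.comp (computable_rat_den.comp .fst)
      (computable_rat_den.comp .snd))).of_eq fun _ => (Rat.mul_def' ..).symm

theorem computable_rat_crossMul : Computable₂ fun x y : ℚ => x.num * y.den :=
  primrec_int_mul.to_comp.comp (computable_rat_num.comp .fst)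
    (primrec_int_natCast.to_comp.comp (computable_rat_den.comp .snd))

theorem computable_rat_add : Computable₂ fun x y : ℚ => x + y :=
  (computable_mkRat.comp
    (primrec_int_add.to_comp.comp computable_rat_crossMul
      (computable_rat_crossMul.comp .snd .fst))
    (Primrec.nat_mul.to_comp.comp (computable_rat_den.comp .fst)
      (computable_rat_den.comp .snd))).of_eq fun _ => (Rat.add_def' ..).symm

theorem computable_rat_neg : Computable fun x : ℚ => -x :=
  (computable_rat_mul.comp (Computable.const (-1)) .id).of_eq fun _ => neg_one_mul _

theorem computable_rat_sub : Computable₂ fun x y : ℚ => x - y :=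
  (computable_rat_add.comp .fst (computable_rat_neg.comp .snd)).of_eq fun _ =>
    (sub_eq_add_neg ..).symm

theorem computablePred_rat_le : ComputablePred fun p : ℚ × ℚ => p.1 ≤ p.2 :=
  ComputablePred.of_eq (ComputablePred.computable_of_manyOneReducible
    ⟨_, computable_rat_crossMul.pair (computable_rat_crossMul.comp .snd .fst), fun _ => Iff.rfl⟩
    (PrimrecPred.computablePred primrecRel_int_le)) fun _ => (Rat.le_iff ..).symm

theorem computable_rat_max : Computable₂ fun x y : ℚ => max x y :=
  (Computable.cond computablePred_rat_le.decide .snd .fst).of_eq fun p => by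
    rcases le_or_gt p.1 p.2 with h | h
    · simp [h]
    · simp [h.le, h.not_ge]

theorem computable_rat_abs : Computable fun x : ℚ => |x| :=
  (computable_rat_max.comp .id computable_rat_neg).of_eq fun _ => rfl

theorem exists_computable_int_near : ∃ z : ℚ → ℤ, Computable z ∧ ∀ q, |q - z q| ≤ 1 / 2 := by
  have hdist : Computable fun p : ℚ × ℤ => |p.1 - p.2| :=
    computable_rat_abs.comp (computable_rat_sub.comp .fst (computable_rat_intCast.comp .snd))
  have hR : ComputablePred fun p : ℚ × ℤ => |p.1 - p.2| ≤ 1 / 2 :=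
    ComputablePred.computable_of_manyOneReducible
      ⟨_, hdist.pair (.const (1 / 2)), fun _ => Iff.rfl⟩ computablePred_rat_le
  exact exists_computable_selector (R := fun (q : ℚ) (z : ℤ) => |q - z| ≤ 1 / 2) hR
    fun q => ⟨round q, abs_sub_round q⟩

theorem exists_computable_unitAddCircle_norm :
    ∃ g : ℚ → ℚ, Computable g ∧ ∀ q, (g q : ℝ) = ‖((q : ℝ) : AddCircle (1 : ℝ))‖ := by
  obtain ⟨z, hz, hzle⟩ := exists_computable_int_near
  refine ⟨fun q => |q - z q|, computable_rat_abs.comp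
    (computable_rat_sub.comp .id (computable_rat_intCast.comp hz)), fun q => ?_⟩
  have hcoe : ((q - z q : ℝ) : AddCircle (1 : ℝ)) = ((q : ℝ) : AddCircle (1 : ℝ)) := by
    rw [AddCircle.coe_sub, sub_eq_self, AddCircle.coe_eq_zero_iff]
    exact ⟨z q, by simp⟩
  have hle : |(q - z q : ℝ)| ≤ |1| / 2 := by
    simpa using (Rat.cast_le (K := ℝ)).2 (hzle q)
  rw [← hcoe, (AddCircle.norm_coe_eq_abs_iff 1 one_ne_zero).2 hle]
  push_cast
  rfl

theorem computable_rat_pow (b : ℚ) : Computable fun n : ℕ => b ^ n := by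
  refine (Computable.nat_rec Computable.id (.const (1 : ℚ))
    (computable_rat_mul.comp (Computable.snd.comp .snd) (.const b)).to₂).of_eq fun n => ?_
  induction n with
  | zero => exact (pow_zero b).symm
  | succ n ih => exact (congrArg (· * b) ih).trans (pow_succ ..).symm

theorem computable_rat_sum_range {α : Type*} [Primcodable α] {f : α → ℕ → ℚ} (hf : Computable₂ f) :
    Computable₂ fun a n => ∑ i ∈ Finset.range n, f a i := by
  refine (Computable.nat_rec Computable.snd (.const (0 : ℚ)) (computable_rat_add.comp
    (Computable.snd.comp .snd) (hf.comp (Computable.fst.comp .fst)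
      (Computable.fst.comp .snd))).to₂).of_eq fun ⟨a, n⟩ => ?_
  induction n with
  | zero => rfl
  | succ n ih => exact (congrArg (· + f a n) ih).trans (Finset.sum_range_succ ..).symm

end RatComputable

section BumpSeries

variable {X : Type*} [PseudoMetricSpace X]

/-- The tent function of height `r` supported on the ball of radius `r` around `c`. -/
noncomputable def tent (c : X) (r : ℝ) (x : X) : ℝ := max 0 (r - dist x c)

/-- The weighted sum of the tents on the balls `ball (c s) (r s)`: for bounded radii, a Lipschitz
function that is positive exactly on the union of these balls. -/
noncomputable def bumpSeries (c : ℕ → X) (r : ℕ → ℝ) (x : X) : ℝ :=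
  ∑' s, (1 / 2) ^ (s + 2) * tent (c s) (r s) x

theorem tent_nonneg (c : X) (r : ℝ) (x : X) : 0 ≤ tent c r x := le_max_left _ _

theorem tent_pos_iff {c : X} {r : ℝ} {x : X} : 0 < tent c r x ↔ x ∈ Metric.ball c r := by
  simp [tent]

theorem tent_le_one {r : ℝ} (hr : r ≤ 1) (c x : X) : tent c r x ≤ 1 :=
  max_le zero_le_one (by linarith [dist_nonneg (x := x) (y := c)])

theorem abs_tent_sub_tent_le (c : X) (r : ℝ) (x y : X) :
    |tent c r x - tent c r y| ≤ dist x y := by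
  calc |tent c r x - tent c r y| ≤ |(r - dist x c) - (r - dist y c)| := by
        simpa only [tent, max_comm (0 : ℝ)] using abs_max_sub_max_le_abs _ _ 0
    _ = |dist y c - dist x c| := by rw [sub_sub_sub_cancel_left]
    _ ≤ dist y x := abs_dist_sub_le y x c
    _ = dist x y := dist_comm y x

theorem hasSum_half_pow_add_two : HasSum (fun s : ℕ => (1 / 2 : ℝ) ^ (s + 2)) (1 / 2) := by
  have h : HasSum (fun s : ℕ => (1 / 2 : ℝ) ^ s * (1 / 2) ^ 2) (2 * (1 / 2) ^ 2) :=
    hasSum_geometric_two.mul_right _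
  simpa only [← pow_add, show 2 * (1 / 2 : ℝ) ^ 2 = 1 / 2 by norm_num] using h

variable {c : ℕ → X} {r : ℕ → ℝ}

theorem weighted_tent_nonneg (x : X) (s : ℕ) : 0 ≤ (1 / 2 : ℝ) ^ (s + 2) * tent (c s) (r s) x :=
  mul_nonneg (by positivity) (tent_nonneg _ _ _)

theorem bumpSeries_nonneg (x : X) : 0 ≤ bumpSeries c r x := tsum_nonneg (weighted_tent_nonneg x)

section

variable (hr : ∀ s, r s ≤ 1)
include hr

theorem weighted_tent_le (x : X) (s : ℕ) :
    (1 / 2 : ℝ) ^ (s + 2) * tent (c s) (r s) x ≤ (1 / 2) ^ (s + 2) :=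
  mul_le_of_le_one_right (by positivity) (tent_le_one (hr s) _ _)

theorem summable_weighted_tent (x : X) :
    Summable fun s => (1 / 2 : ℝ) ^ (s + 2) * tent (c s) (r s) x :=
  .of_nonneg_of_le (weighted_tent_nonneg x) (weighted_tent_le hr x)
    hasSum_half_pow_add_two.summable

theorem bumpSeries_pos_iff (x : X) :
    0 < bumpSeries c r x ↔ x ∈ ⋃ s, Metric.ball (c s) (r s) := by
  rw [Set.mem_iUnion]
  refine ⟨fun h => ?_, fun ⟨s, hs⟩ => (summable_weighted_tent hr x).tsum_pos
    (weighted_tent_nonneg x) s (mul_pos (by positivity) (tent_pos_iff.2 hs))⟩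
  by_contra! hout
  have hzero : ∀ s, tent (c s) (r s) x = 0 := fun s =>
    le_antisymm (not_lt.1 (mt tent_pos_iff.1 (hout s))) (tent_nonneg _ _ _)
  simp [bumpSeries, hzero] at h

theorem lipschitzWith_bumpSeries : LipschitzWith (1 / 2) (bumpSeries c r) := by
  refine LipschitzWith.of_dist_le_mul fun x y => ?_
  have hterm : ∀ s, ‖(1 / 2 : ℝ) ^ (s + 2) * tent (c s) (r s) x -
      (1 / 2) ^ (s + 2) * tent (c s) (r s) y‖ ≤ (1 / 2) ^ (s + 2) * dist x y := fun s => by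
    rw [← mul_sub, norm_mul, Real.norm_of_nonneg (by positivity)]
    exact mul_le_mul_of_nonneg_left (abs_tent_sub_tent_le ..) (by positivity)
  rw [bumpSeries, bumpSeries, dist_eq_norm,
    ← (summable_weighted_tent hr x).tsum_sub (summable_weighted_tent hr y)]
  exact tsum_of_norm_bounded (hasSum_half_pow_add_two.mul_right _) hterm

theorem abs_sum_range_sub_bumpSeries_lt (x : X) (n : ℕ) :
    |∑ s ∈ Finset.range n, (1 / 2 : ℝ) ^ (s + 2) * tent (c s) (r s) x - bumpSeries c r x| <
      (1 / 2) ^ n := by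
  have htail : HasSum (fun s => (1 / 2 : ℝ) ^ (s + n + 2)) ((1 / 2) ^ (n + 1)) := by
    simpa only [← pow_add, ← pow_succ', add_right_comm _ 2 n] using
      hasSum_half_pow_add_two.mul_right ((1 / 2 : ℝ) ^ n)
  have hle := tsum_of_norm_bounded htail fun s => (Real.norm_of_nonneg
    (weighted_tent_nonneg (c := c) (r := r) x (s + n))).trans_le (weighted_tent_le hr x (s + n))
  rw [bumpSeries, ← (summable_weighted_tent hr x).sum_add_tsum_nat_add n, sub_add_cancel_left,
    abs_neg]
  exact hle.trans_lt (pow_lt_pow_right_of_lt_one₀ (by norm_num) (by norm_num) n.lt_succ_self)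

end

end BumpSeries

section DisplacementMap

theorem lipschitzWith_coe_addCircle (T : ℝ) : LipschitzWith 1 ((↑) : ℝ → AddCircle T) :=
  LipschitzWith.of_dist_le_mul fun x y => by
    simpa [dist_eq_norm] using QuotientAddGroup.norm_mk_le_norm (S := AddSubgroup.zmultiples T)
      (m := x - y)

theorem monotone_id_add_of_lipschitzWith {f : ℝ → ℝ} {K : NNReal} (hK : K ≤ 1)
    (hf : LipschitzWith K f) : Monotone fun x => x + f x := fun x y hxy => by
  have hstep : |f x - f y| ≤ 1 * (y - x) :=
    calc |f x - f y| ≤ K * |x - y| := hf.dist_le_mul x y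
      _ ≤ 1 * (y - x) := by
        rw [abs_sub_comm, abs_of_nonneg (sub_nonneg.2 hxy)]
        exact mul_le_mul_of_nonneg_right hK (sub_nonneg.2 hxy)
  change x + f x ≤ y + f y
  linarith [le_abs_self (f x - f y)]

theorem isComputableFunOnUnitInterval_of_lipschitzWith_two {t : ℝ → ℝ} (ht : LipschitzWith 2 t)
    {F : ℚ → ℕ → ℚ} (hF : Computable₂ F)
    (hFt : ∀ (q : ℚ) (n : ℕ), |(F q n : ℝ) - t q| < 2 ^ (-(n : ℤ))) :
    IsComputableFunOnUnitInterval t := by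
  refine ⟨⟨F, hF, fun q _ => hFt q⟩, fun n => n + 1, Primrec.succ.to_comp, fun x _ y _ n hxy => ?_⟩
  calc |t x - t y| ≤ 2 * |x - y| := ht.dist_le_mul x y
    _ ≤ 2 * 2 ^ (-((n + 1 : ℕ) : ℤ)) := by gcongr
    _ = 2 ^ (-(n : ℤ)) := by
      rw [← zpow_one_add₀ two_ne_zero]
      congr 1
      push_cast
      ring

theorem isComputableFunOnUnitInterval_id_add_bumpSeries {c r : ℕ → ℚ} (hc : Computable c)
    (hr : Computable r) (hr1 : ∀ s, r s ≤ 1) :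
    IsComputableFunOnUnitInterval fun x => x + bumpSeries
      (fun s => ((c s : ℝ) : AddCircle (1 : ℝ))) (fun s => (r s : ℝ)) (x : AddCircle (1 : ℝ)) := by
  obtain ⟨g, hg, hgnorm⟩ := exists_computable_unitAddCircle_norm
  have hr1' : ∀ s, (r s : ℝ) ≤ 1 := fun s => mod_cast hr1 s
  let summand (q : ℚ) (s : ℕ) : ℚ := (1 / 2) ^ (s + 2) * max 0 (r s - g (q - c s))
  have hterm : Computable₂ summand := by
    have hdist : Computable₂ fun (q : ℚ) (s : ℕ) => g (q - c s) :=
      hg.comp (computable_rat_sub.comp .fst (hc.comp .snd))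
    exact computable_rat_mul.comp
      ((computable_rat_pow _).comp ((Primrec.nat_add.comp .snd (.const 2)).to_comp))
      (computable_rat_max.comp (.const 0) (computable_rat_sub.comp (hr.comp .snd) hdist))
  have hcast (q : ℚ) (s : ℕ) : (summand q s : ℝ) = (1 / 2) ^ (s + 2) *
      tent ((c s : ℝ) : AddCircle (1 : ℝ)) (r s) ((q : ℝ) : AddCircle (1 : ℝ)) := by
    simp [summand, tent, hgnorm, dist_eq_norm]
  refine isComputableFunOnUnitInterval_of_lipschitzWith_two
    ((LipschitzWith.id.add ((lipschitzWith_bumpSeries hr1').comp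
      (lipschitzWith_coe_addCircle 1))).weaken ?_)
    (F := fun q n => q + ∑ s ∈ Finset.range n, summand q s)
    (computable_rat_add.comp .fst (computable_rat_sum_range hterm)) fun q n => ?_
  · exact NNReal.coe_le_coe.1 (by norm_num)
  · simpa [hcast] using abs_sum_range_sub_bumpSeries_lt (c := fun s =>
      ((c s : ℝ) : AddCircle (1 : ℝ))) hr1' ((q : ℝ) : AddCircle (1 : ℝ)) n

end DisplacementMap

section Dynamics

theorem comp_ae_eq_of_le_comp {α : Type*} [MeasurableSpace α] {μ : Measure α} {f : α → α}
    {g : α → ℝ} (hf : MeasurePreserving f μ μ) (hg : Integrable g μ) (hle : ∀ x, g x ≤ g (f x)) :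
    g ∘ f =ᵐ[μ] g := by
  have hgf : Integrable (g ∘ f) μ := hf.integrable_comp_of_integrable hg
  have hint : ∫ x, g x ∂μ = ∫ x, (g ∘ f) x ∂μ := by
    have := integral_map hf.aemeasurable (hf.map_eq.symm ▸ hg.aestronglyMeasurable)
    rwa [hf.map_eq] at this
  exact ((integral_eq_iff_of_ae_le hg hgf (.of_forall hle)).1 hint).symm

variable {T : ℝ} [hT : Fact (0 < T)]

/-- Since `H` vanishes at `a` and contracts, the forward step of length `H y` cannot cross `a`. -/
theorem equivIco_add_eq_of_lipschitz {H : AddCircle T → ℝ} {K : NNReal} (hK : K < 1)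
    (hH : LipschitzWith K H) (hH0 : ∀ y, 0 ≤ H y) {a : ℝ} (ha : H a = 0) (y : AddCircle T) :
    (AddCircle.equivIco T a (y + (H y : AddCircle T)) : ℝ) = AddCircle.equivIco T a y + H y := by
  set x : ℝ := (AddCircle.equivIco T a y : ℝ)
  have hx : x ∈ Set.Ico a (a + T) := (AddCircle.equivIco T a y).2
  have hxy : (x : AddCircle T) = y := AddCircle.coe_equivIco
  have hHle : H y ≤ K * (a + T - x) := by
    have hend : ((x - (a + T) : ℝ) : AddCircle T) = y - a := by
      rw [AddCircle.coe_sub, AddCircle.coe_add_period, hxy]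
    calc H y = |H y - H a| := by rw [ha, sub_zero, abs_of_nonneg (hH0 y)]
      _ ≤ K * ‖y - a‖ := by simpa [dist_eq_norm] using hH.dist_le_mul y a
      _ ≤ K * |x - (a + T)| := by
        rw [← hend]
        gcongr
        exact QuotientAddGroup.norm_mk_le_norm
      _ = K * (a + T - x) := by rw [abs_sub_comm, abs_of_nonneg (by linarith [hx.2])]
  have hmem : x + H y ∈ Set.Ico a (a + T) := by
    refine ⟨by linarith [hx.1, hH0 y], ?_⟩
    calc x + H y ≤ x + K * (a + T - x) := by gcongr
      _ < x + 1 * (a + T - x) := by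
        gcongr
        exacts [sub_pos.2 hx.2, hK]
      _ = a + T := by ring
  rw [← AddCircle.equivIco_coe_of_mem hmem, AddCircle.coe_add, hxy]

theorem ae_eq_zero_of_measurePreserving_add {H : AddCircle T → ℝ} {K : NNReal} (hK : K < 1)
    (hH : LipschitzWith K H) (hH0 : ∀ y, 0 ≤ H y) {p : AddCircle T} (hp : H p = 0)
    {μ : Measure (AddCircle T)} [IsFiniteMeasure μ]
    (hμ : MeasurePreserving (fun y => y + (H y : AddCircle T)) μ μ) : H =ᵐ[μ] 0 := by
  obtain ⟨a, rfl⟩ := QuotientAddGroup.mk_surjective p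
  have hstep := equivIco_add_eq_of_lipschitz hK hH hH0 hp
  have hint : Integrable (fun y => (AddCircle.equivIco T a y : ℝ)) μ :=
    .of_bound (C := |a| + T) (measurable_subtype_coe.comp
      (AddCircle.measurableEquivIco T a).measurable).aestronglyMeasurable (.of_forall fun y => by
        obtain ⟨h1, h2⟩ := (AddCircle.equivIco T a y).2
        rw [Real.norm_eq_abs, abs_le]
        constructor <;> linarith [neg_abs_le a, le_abs_self a, hT.out])
  have hle (y : AddCircle T) : (AddCircle.equivIco T a y : ℝ) ≤
      AddCircle.equivIco T a (y + (H y : AddCircle T)) :=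
    (hstep y).symm ▸ le_add_of_nonneg_right (hH0 y)
  filter_upwards [comp_ae_eq_of_le_comp hμ hint hle] with y hy
  simpa [hstep] using hy

end Dynamics

section CircleMeasures

theorem circleArc_sub_add (c r : ℚ) :
    circleArc (c - r) (c + r) = Metric.ball ((c : ℝ) : AddCircle (1 : ℝ)) r := by
  ext y
  simp only [circleArc, Set.mem_image, Set.mem_Ioo, Rat.cast_sub, Rat.cast_add, mem_ball_iff_norm]
  constructor
  · rintro ⟨x, ⟨hleft, hright⟩, rfl⟩
    rw [← AddCircle.coe_sub]
    exact QuotientAddGroup.norm_mk_le_norm.trans_lt (abs_lt.2 ⟨by linarith, by linarith⟩)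
  · intro hy
    obtain ⟨x, hx, hxr⟩ := QuotientAddGroup.norm_lt_iff.1 hy
    obtain ⟨hleft, hright⟩ := abs_lt.1 hxr
    refine ⟨c + x, ⟨by linarith, by linarith⟩, ?_⟩
    rw [AddCircle.coe_add]
    exact (congrArg _ hx).trans (add_sub_cancel _ _)

theorem exists_measure_ball_natCast_mul_ne_zero {T δ : ℝ} [hT : Fact (0 < T)] (hδ : 0 < δ)
    {μ : Measure (AddCircle T)} (hμ : μ ≠ 0) :
    ∃ j : ℕ, μ (Metric.ball ((j * δ : ℝ) : AddCircle T) δ) ≠ 0 := by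
  by_contra! hnull
  have hcover : ⋃ j : ℕ, Metric.ball ((j * δ : ℝ) : AddCircle T) δ = Set.univ := by
    refine Set.eq_univ_of_forall fun y => Set.mem_iUnion.2 ?_
    obtain ⟨x, hx, rfl⟩ := AddCircle.coe_image_Ico_eq (p := T) 0 ▸ Set.mem_univ y
    refine ⟨⌊x / δ⌋₊, ?_⟩
    have hlow : ⌊x / δ⌋₊ * δ ≤ x := (le_div_iff₀ hδ).1 (Nat.floor_le (div_nonneg hx.1 hδ.le))
    have hhigh : x < (⌊x / δ⌋₊ + 1) * δ := (div_lt_iff₀ hδ).1 (Nat.lt_floor_add_one _)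
    rw [mem_ball_iff_norm, ← AddCircle.coe_sub]
    exact QuotientAddGroup.norm_mk_le_norm.trans_lt (abs_lt.2 ⟨by linarith, by linarith⟩)
  exact hμ (Measure.measure_univ_eq_zero.1 (hcover ▸ measure_iUnion_null hnull))

theorem exists_computable_limit_pos {α β : Type*} [Primcodable α] [Denumerable β]
    {f : α × β → ℕ → ℚ} {l : α × β → ℝ} (hf : Computable₂ f) (hmono : ∀ p, Monotone (f p))
    (hlim : ∀ p, Tendsto (fun m => (f p m : ℝ)) atTop (𝓝 (l p))) (hex : ∀ a, ∃ b, 0 < l (a, b)) :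
    ∃ g : α → β, Computable g ∧ ∀ a, 0 < l (a, g a) := by
  have hdec : ComputablePred fun x : α × (β × ℕ) => 0 < f (x.1, x.2.1) x.2.2 := by
    have hval := hf.comp (Computable.fst.pair (Computable.fst.comp .snd))
      (Computable.snd.comp (Computable.snd (α := α) (β := β × ℕ)))
    exact (ComputablePred.computable_of_manyOneReducible
      ⟨_, hval.pair (.const 0), fun _ => Iff.rfl⟩ computablePred_rat_le).not.of_eq
        fun _ => not_le
  have hwitness : ∀ a, ∃ x : β × ℕ, 0 < f (a, x.1) x.2 := fun a => by
    obtain ⟨b, hb⟩ := hex a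
    obtain ⟨m, hm⟩ := ((hlim (a, b)).eventually_const_lt hb).exists
    exact ⟨(b, m), mod_cast hm⟩
  obtain ⟨g, hg, hgpos⟩ := exists_computable_selector
    (R := fun (a : α) (x : β × ℕ) => 0 < f (a, x.1) x.2) hdec hwitness
  refine ⟨fun a => (g a).1, Computable.fst.comp hg, fun a => ?_⟩
  have hle : (f (a, (g a).1) (g a).2 : ℝ) ≤ l (a, (g a).1) :=
    (Rat.cast_mono.comp (hmono (a, (g a).1))).ge_of_tendsto (hlim _) (g a).2
  exact (Rat.cast_pos.2 (hgpos a)).trans_le hle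

theorem IsComputableMeasureCircle.exists_computable_ball {μ : Measure (AddCircle (1 : ℝ))}
    [IsFiniteMeasure μ] (hμ : IsComputableMeasureCircle μ) (hμ0 : μ ≠ 0) {δ : ℕ → ℚ}
    (hδ : Computable δ) (hδ0 : ∀ n, 0 < δ n) :
    ∃ g : ℕ → ℕ, Computable g ∧
      ∀ n, μ (Metric.ball ((g n * δ n : ℝ) : AddCircle (1 : ℝ)) (δ n)) ≠ 0 := by
  obtain ⟨f, hf, hμf⟩ := hμ
  let arcs (p : ℕ × ℕ) : List (ℚ × ℚ) := [(p.2 * δ p.1 - δ p.1, p.2 * δ p.1 + δ p.1)]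
  have harcs : Computable arcs := by
    have hradius := hδ.comp (Computable.fst (α := ℕ) (β := ℕ))
    have hcenter := computable_rat_mul.comp (computable_rat_natCast.comp .snd) hradius
    exact Computable.list_cons.comp ((computable_rat_sub.comp hcenter hradius).pair
      (computable_rat_add.comp hcenter hradius)) (.const [])
  have hlim : ∀ p : ℕ × ℕ, Tendsto (fun m => (f (arcs p) m : ℝ)) atTop
      (𝓝 (μ (Metric.ball ((p.2 * δ p.1 : ℝ) : AddCircle (1 : ℝ)) (δ p.1))).toReal) := fun p => by
    simpa [arcs, circleArc_sub_add] using (hμf (arcs p)).2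
  obtain ⟨g, hg, hgpos⟩ := exists_computable_limit_pos
    (f := fun p => f (arcs p)) (hf.comp (harcs.comp .fst) .snd) (fun p => (hμf (arcs p)).1) hlim
    fun n => (exists_measure_ball_natCast_mul_ne_zero (Rat.cast_pos.2 (hδ0 n)) hμ0).imp
        fun j hj => ENNReal.toReal_pos hj (measure_ne_top _ _)
  exact ⟨g, hg, fun n => (ENNReal.toReal_pos_iff.1 (hgpos n)).1.ne'⟩

end CircleMeasures

section Diagonalization

open Nat.Partrec (Code)

/-- The output of the `n`-th program on input `n` when run for `k` stages, where `s = ⟨n, k⟩`. -/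
def diagonalValue (s : ℕ) : Option ℕ :=
  Code.evaln s.unpair.2 (Denumerable.ofNat Code s.unpair.1) s.unpair.1

/-- The radius of the ball removed from the circle to defeat the `n`-th program. -/
def diagonalScale (n : ℕ) : ℚ := (1 / 2) ^ (n + 3)

/-- The `s`-th diagonal ball, `s = ⟨n, k⟩`, is empty until the `n`-th program halts on input `n`
and then has the output as its center, in units of `diagonalScale n`. -/
def diagonalCenter (s : ℕ) : ℚ := (diagonalValue s).getD 0 * diagonalScale s.unpair.1

/-- The radius of the `s`-th diagonal ball, zero until the program halts. -/
def diagonalRadius (s : ℕ) : ℚ := if (diagonalValue s).isSome then diagonalScale s.unpair.1 else 0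

theorem diagonalScale_pos (n : ℕ) : 0 < diagonalScale n := by
  unfold diagonalScale
  positivity

theorem diagonalRadius_le_one (s : ℕ) : diagonalRadius s ≤ 1 := by
  have : diagonalScale s.unpair.1 ≤ 1 := pow_le_one₀ (by norm_num) (by norm_num)
  unfold diagonalRadius
  split_ifs
  exacts [this, zero_le_one]

theorem computable_diagonalScale : Computable diagonalScale :=
  (computable_rat_pow _).comp (Primrec.nat_add.comp .id (.const 3)).to_comp

theorem computable_diagonalValue : Computable diagonalValue :=
  (Code.primrec_evaln.comp ((Primrec.pair (Primrec.snd.comp .unpair)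
    ((Primrec.ofNat Code).comp (Primrec.fst.comp .unpair))).pair
      (Primrec.fst.comp .unpair))).to_comp

theorem computable_diagonalCenter : Computable diagonalCenter :=
  computable_rat_mul.comp
    (computable_rat_natCast.comp (Computable.option_getD computable_diagonalValue (.const 0)))
    (computable_diagonalScale.comp (Computable.fst.comp .unpair))

theorem computable_diagonalRadius : Computable diagonalRadius :=
  (Computable.cond (Primrec.option_isSome.to_comp.comp computable_diagonalValue)
    (computable_diagonalScale.comp (Computable.fst.comp .unpair)) (.const 0)).of_eq fun s => by
      unfold diagonalRadius
      cases diagonalValue s <;> rfl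

theorem exists_diagonalCenter_eq {g : ℕ → ℕ} (hg : Computable g) :
    ∃ n s, diagonalCenter s = g n * diagonalScale n ∧ diagonalRadius s = diagonalScale n := by
  obtain ⟨c, hc⟩ := Code.exists_code.1 (Partrec.nat_iff.1 hg.partrec)
  set n := Encodable.encode c
  obtain ⟨k, hk⟩ := Code.evaln_complete.1 (show g n ∈ c.eval n by rw [hc]; exact Part.mem_some _)
  have hval : diagonalValue (Nat.pair n k) = some (g n) := by
    simpa [diagonalValue, n] using hk
  exact ⟨n, Nat.pair n k, by simp [diagonalCenter, hval], by simp [diagonalRadius, hval]⟩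

theorem IsComputableMeasureCircle.exists_measure_diagonalBall_ne_zero
    {μ : Measure (AddCircle (1 : ℝ))} [IsFiniteMeasure μ] (hμ : IsComputableMeasureCircle μ)
    (hμ0 : μ ≠ 0) :
    ∃ s, μ (Metric.ball ((diagonalCenter s : ℝ) : AddCircle (1 : ℝ)) (diagonalRadius s)) ≠ 0 := by
  obtain ⟨g, hg, hgμ⟩ := hμ.exists_computable_ball hμ0 computable_diagonalScale diagonalScale_pos
  obtain ⟨n, s, hcenter, hradius⟩ := exists_diagonalCenter_eq hg
  exact ⟨s, by simpa [hcenter, hradius] using hgμ n⟩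

theorem exists_diagonalBall_subset (n : ℕ) : ∃ z : AddCircle (1 : ℝ), ∀ k,
    Metric.ball ((diagonalCenter (Nat.pair n k) : ℝ) : AddCircle (1 : ℝ))
      (diagonalRadius (Nat.pair n k)) ⊆ Metric.ball z (diagonalScale n) := by
  by_cases hhalt : ∃ v, v ∈ (Denumerable.ofNat Code n).eval n
  · obtain ⟨v, hv⟩ := hhalt
    refine ⟨((v * diagonalScale n : ℝ) : AddCircle (1 : ℝ)), fun k => ?_⟩
    rcases hw : diagonalValue (Nat.pair n k) with _ | w
    · simp [diagonalRadius, hw]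
    · have hwv : w = v := Part.mem_unique (Code.evaln_sound (by simpa [diagonalValue] using hw)) hv
      simp [diagonalRadius, diagonalCenter, hw, hwv]
  · refine ⟨0, fun k => ?_⟩
    have hval : diagonalValue (Nat.pair n k) = none := Option.eq_none_iff_forall_not_mem.2
      fun w hw => hhalt ⟨w, Code.evaln_sound (by simpa [diagonalValue] using hw)⟩
    simp [diagonalRadius, hval]

theorem iUnion_ball_ne_univ {T : ℝ} [hT : Fact (0 < T)] {c : ℕ → AddCircle T} {ρ : ℕ → ℝ} {S : ℝ}
    (hρ0 : ∀ n, 0 ≤ ρ n) (hρ : HasSum ρ S) (hS : 2 * S < T) :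
    ⋃ n, Metric.ball (c n) (ρ n) ≠ Set.univ := by
  intro hcover
  have hball : ∀ n, volume (Metric.ball (c n) (ρ n)) ≤ ENNReal.ofReal (2 * ρ n) := fun n =>
    calc volume (Metric.ball (c n) (ρ n)) ≤ volume (Metric.closedBall (c n) (ρ n)) :=
          measure_mono Metric.ball_subset_closedBall
      _ = ENNReal.ofReal (min T (2 * ρ n)) := AddCircle.volume_closedBall _ _
      _ ≤ ENNReal.ofReal (2 * ρ n) := ENNReal.ofReal_le_ofReal (min_le_right _ _)
  have : ENNReal.ofReal T ≤ ENNReal.ofReal (2 * S) :=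
    calc ENNReal.ofReal T = volume (⋃ n, Metric.ball (c n) (ρ n)) := by
          rw [hcover, AddCircle.measure_univ]
      _ ≤ ∑' n, ENNReal.ofReal (2 * ρ n) := (measure_iUnion_le _).trans (ENNReal.tsum_le_tsum hball)
      _ = ENNReal.ofReal (2 * S) := by
          rw [← ENNReal.ofReal_tsum_of_nonneg (fun n => by linarith [hρ0 n])
            (hρ.mul_left 2).summable, (hρ.mul_left 2).tsum_eq]
  exact (ENNReal.ofReal_lt_ofReal_iff hT.out).2 hS |>.not_ge this

theorem iUnion_diagonalBall_ne_univ :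
    ⋃ s, Metric.ball ((diagonalCenter s : ℝ) : AddCircle (1 : ℝ)) (diagonalRadius s) ≠
      Set.univ := by
  choose z hz using exists_diagonalBall_subset
  have hsum : HasSum (fun n => (diagonalScale n : ℝ)) (1 / 2 * (1 / 2)) := by
    have hscale (n : ℕ) : (diagonalScale n : ℝ) = (1 / 2) ^ (n + 2) * (1 / 2) := by
      simp [diagonalScale, pow_succ]
    simpa only [hscale] using hasSum_half_pow_add_two.mul_right (1 / 2)
  refine fun hcover => iUnion_ball_ne_univ (c := z)
    (fun n => (Rat.cast_pos.2 (diagonalScale_pos n)).le) hsum (by norm_num)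
    (Set.univ_subset_iff.1 (hcover.symm.subset.trans ?_))
  refine Set.iUnion_subset fun s => Set.subset_iUnion_of_subset s.unpair.1 ?_
  simpa using hz s.unpair.1 s.unpair.2

end Diagonalization


/-- There is a computable, nondecreasing, continuous function `t : [0,1] → ℝ` with
`t 1 = t 0 + 1` such that the induced circle endomorphism `T₁ : ℝ/ℤ → ℝ/ℤ`,
`T₁(x) = t(x) mod ℤ`, has the property that every `T₁`-invariant Borel probability
measure on `ℝ/ℤ` is not computable. -/
theorem exists_circle_map_all_invariant_measures_noncomputable :
    ∃ t : ℝ → ℝ, IsComputableFunOnUnitInterval t ∧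
      MonotoneOn t (Set.Icc 0 1) ∧ ContinuousOn t (Set.Icc 0 1) ∧
      t 1 = t 0 + 1 ∧
      ∃ T : AddCircle (1 : ℝ) → AddCircle (1 : ℝ),
        (∀ x ∈ Set.Icc (0 : ℝ) 1,
          T ((x : ℝ) : AddCircle (1 : ℝ)) = ((t x : ℝ) : AddCircle (1 : ℝ))) ∧
        ∀ μ : Measure (AddCircle (1 : ℝ)), IsProbabilityMeasure μ →
          (∀ A : Set (AddCircle (1 : ℝ)), MeasurableSet A → μ (T ⁻¹' A) = μ A) →
          ¬ IsComputableMeasureCircle μ := by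
  have hradius : ∀ s, (diagonalRadius s : ℝ) ≤ 1 := fun s => mod_cast diagonalRadius_le_one s
  set H : AddCircle (1 : ℝ) → ℝ := bumpSeries
    (fun s => ((diagonalCenter s : ℝ) : AddCircle (1 : ℝ))) (fun s => (diagonalRadius s : ℝ))
  have hpos (x) : 0 < H x ↔ _ := bumpSeries_pos_iff hradius x
  have hH : LipschitzWith (1 / 2) H := lipschitzWith_bumpSeries hradius
  have hHcoe := hH.comp (lipschitzWith_coe_addCircle 1)
  obtain ⟨p, hp⟩ := (Set.ne_univ_iff_exists_notMem _).1 iUnion_diagonalBall_ne_univ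
  have hHp : H p = 0 := ((bumpSeries_nonneg p).eq_of_not_lt (mt (hpos p).1 hp)).symm
  refine ⟨fun x => x + H x, isComputableFunOnUnitInterval_id_add_bumpSeries
    computable_diagonalCenter computable_diagonalRadius diagonalRadius_le_one,
    (monotone_id_add_of_lipschitzWith (by norm_num) hHcoe).monotoneOn _,
    (continuous_id.add hHcoe.continuous).continuousOn, ?_,
    fun y => y + (H y : AddCircle (1 : ℝ)), fun x _ => rfl, fun μ _ hinv hμ => ?_⟩
  · simp [AddCircle.coe_period, add_comm]
  obtain ⟨s, hs⟩ := hμ.exists_measure_diagonalBall_ne_zero (IsProbabilityMeasure.ne_zero μ)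
  have hT : Measurable fun y => y + (H y : AddCircle (1 : ℝ)) :=
    (continuous_id.add ((AddCircle.continuous_mk' 1).comp hH.continuous)).measurable
  have hmp : MeasurePreserving _ μ μ :=
    ⟨hT, Measure.ext fun A hA => (Measure.map_apply hT hA).trans (hinv A hA)⟩
  have hnull := ae_eq_zero_of_measurePreserving_add (by norm_num) hH bumpSeries_nonneg hHp hmp
  exact hs (measure_mono_null (fun x hx => ((hpos x).2 (Set.mem_iUnion_of_mem s hx)).ne') hnull)
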